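/- arXiv:2501.02942 — 2 statements merged into one kernel-verified Lean document; each statement's English description precedes it below -/
import Mathlib

section
/- Let n ≥ m ≥ 1 and let B_1,…,B_r ∈ ℝ^{n×m} satisfy Σ_{k=1}^r B_k^⊤B_k = I_m and Σ_{k=1}^r B_kB_k^⊤ ⪯ I_n. Let z_1,…,z_r be independent standard Gaussian real random variables on a probability space and set G = Σ_{k=1}^r z_k B_k. Then E[σmax(G)²] ≤ min(m, 2·log(2m) + 2). -/
open MeasureTheory ProbabilityTheory Matrix

/-- The largest singular value (spectral norm) of a real matrix. -/
noncomputable def sigmaMax {n m : ℕ} (G : Matrix (Fin n) (Fin m) ℝ) : ℝ :=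
  ‖LinearMap.toContinuousLinearMap (Matrix.toEuclideanLin G)‖

section GaussianIntegration

lemma integrable_pow_mul_exp_neg_sq_half (a : ℕ) :
    Integrable (fun x : ℝ => x ^ a * Real.exp (-x ^ 2 / 2)) := by
  have h := integrable_rpow_mul_exp_neg_mul_sq (b := 1 / 2) (by norm_num) (s := a)
    (by have : (0 : ℝ) ≤ a := a.cast_nonneg
        linarith)
  refine h.congr (ae_of_all _ fun x => ?_)
  simp only [Real.rpow_natCast]
  congr 2
  ring

lemma gaussianPDFReal_zero_one (x : ℝ) :
    gaussianPDFReal 0 1 x = (√(2 * Real.pi))⁻¹ * Real.exp (-x ^ 2 / 2) := by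
  simp [gaussianPDFReal]

lemma integrable_pow_gaussianReal (a : ℕ) :
    Integrable (fun x : ℝ => x ^ a) (gaussianReal 0 1) :=
  (memLp_id_gaussianReal (μ := 0) (v := 1) a).integrable_norm_pow' |>.mono'
    (by fun_prop) (ae_of_all _ fun x => by simp)

/-- The moment recursion of the standard Gaussian. -/
lemma integral_pow_succ_gaussianReal (a : ℕ) :
    ∫ x, x ^ (a + 1) ∂(gaussianReal 0 1) = a * ∫ x, x ^ (a - 1) ∂(gaussianReal 0 1) := by
  have hderiv (x : ℝ) : HasDerivAt (fun x : ℝ => Real.exp (-x ^ 2 / 2))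
      (-x * Real.exp (-x ^ 2 / 2)) x := by
    have := (((hasDerivAt_pow 2 x).neg).div_const 2).exp
    simp only [Pi.neg_apply] at this
    convert this using 1
    push_cast
    ring
  have key := integral_mul_deriv_eq_deriv_mul_of_integrable
    (u := fun x : ℝ => x ^ a) (u' := fun x => a * x ^ (a - 1))
    (v := fun x : ℝ => Real.exp (-x ^ 2 / 2)) (v' := fun x => -x * Real.exp (-x ^ 2 / 2))
    (fun x _ => hasDerivAt_pow a x) (fun x _ => hderiv x)
    ((integrable_pow_mul_exp_neg_sq_half (a + 1)).neg.congr (ae_of_all _ fun x => by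
      simp only [Pi.neg_apply, Pi.mul_apply]; ring))
    (((integrable_pow_mul_exp_neg_sq_half (a - 1)).const_mul (a : ℝ)).congr
      (ae_of_all _ fun x => by simp only [Pi.mul_apply]; ring))
    (integrable_pow_mul_exp_neg_sq_half a)
  rw [integral_gaussianReal_eq_integral_smul one_ne_zero,
    integral_gaussianReal_eq_integral_smul one_ne_zero]
  simp only [gaussianPDFReal_zero_one, smul_eq_mul, mul_assoc, integral_const_mul]
  have h1 : ∫ x : ℝ, Real.exp (-x ^ 2 / 2) * x ^ (a + 1)
      = -∫ x : ℝ, x ^ a * (-x * Real.exp (-x ^ 2 / 2)) := by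
    rw [← integral_neg]
    congr 1 with x
    ring
  rw [h1, key, neg_neg]
  simp only [mul_assoc, integral_const_mul, mul_comm (Real.exp _)]
  ring

variable {κ : Type*} [Fintype κ]

lemma integrable_eval_pi_gaussianReal (P : MvPolynomial κ ℝ) :
    Integrable (fun z : κ → ℝ => MvPolynomial.eval z P)
      (Measure.pi fun _ : κ => gaussianReal 0 1) := by
  classical
  simp only [MvPolynomial.eval_eq']
  refine integrable_finsetSum _ fun s _ => Integrable.const_mul ?_ _
  exact Integrable.fintype_prod (f := fun i x => x ^ s i) fun i => integrable_pow_gaussianReal _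

lemma integral_eval_monomial_pi_gaussianReal (s : κ →₀ ℕ) (c : ℝ) :
    ∫ z, MvPolynomial.eval z (MvPolynomial.monomial s c) ∂(Measure.pi fun _ : κ => gaussianReal 0 1)
      = c * ∏ i, ∫ x, x ^ s i ∂(gaussianReal 0 1) := by
  simp only [MvPolynomial.eval_monomial, integral_const_mul]
  rw [← integral_fintype_prod_eq_prod (fun i (x : ℝ) => x ^ s i)]
  congr 2 with z
  exact Finsupp.prod_fintype _ _ (by simp)

/-- Gaussian integration by parts for polynomials. -/
lemma integral_mul_eval_pi_gaussianReal (k : κ) (P : MvPolynomial κ ℝ) :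
    ∫ z, z k * MvPolynomial.eval z P ∂(Measure.pi fun _ : κ => gaussianReal 0 1)
      = ∫ z, MvPolynomial.eval z (MvPolynomial.pderiv k P)
          ∂(Measure.pi fun _ : κ => gaussianReal 0 1) := by
  classical
  have hX (P : MvPolynomial κ ℝ) (z : κ → ℝ) :
      z k * MvPolynomial.eval z P = MvPolynomial.eval z (P * MvPolynomial.X k) := by
    simp [mul_comm]
  simp only [hX]
  induction P using MvPolynomial.induction_on' with
  | monomial s c =>
    rw [MvPolynomial.pderiv_monomial, MvPolynomial.X, MvPolynomial.monomial_mul,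
      integral_eval_monomial_pi_gaussianReal, integral_eval_monomial_pi_gaussianReal,
      ← Finset.mul_prod_erase _ _ (Finset.mem_univ k),
      ← Finset.mul_prod_erase _
        (fun i => ∫ x : ℝ, x ^ (s - Finsupp.single k 1 : κ →₀ ℕ) i ∂(gaussianReal 0 1))
        (Finset.mem_univ k)]
    have hne : ∀ i ∈ Finset.univ.erase k,
        ∫ x : ℝ, x ^ (s + Finsupp.single k 1 : κ →₀ ℕ) i ∂(gaussianReal 0 1)
          = ∫ x : ℝ, x ^ (s - Finsupp.single k 1 : κ →₀ ℕ) i ∂(gaussianReal 0 1) := fun i hi => by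
      simp [(Finset.ne_of_mem_erase hi).symm]
    rw [Finset.prod_congr rfl hne]
    simp only [Finsupp.add_apply, Finsupp.tsub_apply, Finsupp.single_eq_same,
      integral_pow_succ_gaussianReal]
    ring
  | add P Q hP hQ =>
    simp only [add_mul, map_add]
    rw [integral_add (integrable_eval_pi_gaussianReal _) (integrable_eval_pi_gaussianReal _),
      integral_add (integrable_eval_pi_gaussianReal _) (integrable_eval_pi_gaussianReal _), hP, hQ]

end GaussianIntegration

section TraceInequalities

variable {ι : Type*} [Fintype ι] [DecidableEq ι]

lemma Matrix.IsHermitian.exists_pow_eq_conj_diagonal {X : Matrix ι ι ℝ} (hX : X.IsHermitian) :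
    ∃ (U : Matrix ι ι ℝ), Uᵀ * U = 1 ∧
      ∀ a : ℕ, X ^ a = U * diagonal (fun i => hX.eigenvalues i ^ a) * Uᵀ := by
  let U : Matrix ι ι ℝ := hX.eigenvectorUnitary
  have hU : Uᵀ * U = 1 := by
    simpa [star_eq_conjTranspose] using Unitary.coe_star_mul_self hX.eigenvectorUnitary
  refine ⟨U, hU, fun a => ?_⟩
  have h1 : X = U * diagonal hX.eigenvalues * Uᵀ := by
    simpa [star_eq_conjTranspose, Unitary.conjStarAlgAut_apply, Function.comp_def]
      using hX.spectral_theorem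
  induction a with
  | zero => simp [mul_eq_one_comm.mp hU]
  | succ a ih =>
    calc X ^ (a + 1) = U * diagonal (fun i => hX.eigenvalues i ^ a) * Uᵀ *
          (U * diagonal hX.eigenvalues * Uᵀ) := by rw [pow_succ, ih, ← h1]
      _ = U * diagonal (fun i => hX.eigenvalues i ^ a) * (Uᵀ * U) *
          diagonal hX.eigenvalues * Uᵀ := by simp only [Matrix.mul_assoc]
      _ = _ := by
        rw [hU, Matrix.mul_one, Matrix.mul_assoc U, diagonal_mul_diagonal]
        simp only [pow_succ]

lemma pow_mul_pow_add_pow_mul_pow_le {a b : ℕ} (hab : Even (a + b)) (x y : ℝ) :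
    x ^ a * y ^ b + y ^ a * x ^ b ≤ x ^ (a + b) + y ^ (a + b) := by
  have h : |x| ^ a * |y| ^ b + |y| ^ a * |x| ^ b ≤ |x| ^ (a + b) + |y| ^ (a + b) := by
    have : 0 ≤ (|x| ^ a - |y| ^ a) * (|x| ^ b - |y| ^ b) := by
      rcases le_total |x| |y| with hxy | hxy
      · exact mul_nonneg_of_nonpos_of_nonpos
          (sub_nonpos.2 (pow_le_pow_left₀ (abs_nonneg _) hxy _))
          (sub_nonpos.2 (pow_le_pow_left₀ (abs_nonneg _) hxy _))
      · exact mul_nonneg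
          (sub_nonneg.2 (pow_le_pow_left₀ (abs_nonneg _) hxy _))
          (sub_nonneg.2 (pow_le_pow_left₀ (abs_nonneg _) hxy _))
    rw [pow_add, pow_add]
    linarith
  rw [hab.pow_abs, hab.pow_abs] at h
  refine le_trans (add_le_add ?_ ?_) h <;>
  · refine (le_abs_self _).trans_eq ?_
    rw [abs_mul, abs_pow, abs_pow]

lemma trace_mul_diagonal_mul_diagonal {K : Matrix ι ι ℝ} (hK : Kᵀ = K) (d e : ι → ℝ) :
    (K * diagonal d * K * diagonal e).trace = ∑ i, ∑ j, K i j ^ 2 * (d j * e i) := by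
  simp only [trace, diag_apply, mul_diagonal]
  refine Finset.sum_congr rfl fun i _ => ?_
  rw [mul_apply, Finset.sum_mul]
  refine Finset.sum_congr rfl fun j _ => ?_
  rw [mul_diagonal, show K j i = K i j from congrFun₂ hK i j]
  ring

lemma Matrix.IsHermitian.trace_mul_pow_mul_pow_le {X H : Matrix ι ι ℝ} (hX : X.IsHermitian)
    (hH : Hᵀ = H) {a b : ℕ} (hab : Even (a + b)) :
    (H * (X ^ a * H * X ^ b)).trace ≤ (H * H * X ^ (a + b)).trace := by
  obtain ⟨U, hU, hpow⟩ := hX.exists_pow_eq_conj_diagonal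
  set d := hX.eigenvalues
  set K := Uᵀ * H * U with hKdef
  have hK : Kᵀ = K := by simp [hKdef, transpose_mul, hH, Matrix.mul_assoc]
  have hconj (a b : ℕ) : (H * (X ^ a * H * X ^ b)).trace
      = ∑ i, ∑ j, K i j ^ 2 * (d j ^ a * d i ^ b) := by
    rw [← trace_mul_diagonal_mul_diagonal hK, hpow a, hpow b, ← Matrix.mul_assoc,
      ← Matrix.mul_assoc, trace_mul_comm]
    simp only [hKdef, Matrix.mul_assoc]
  have h0 : (H * H * X ^ (a + b)).trace = ∑ i, ∑ j, K i j ^ 2 * d i ^ (a + b) := by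
    have := hconj 0 (a + b)
    simpa [Matrix.mul_assoc] using this
  have hswap (f : ι → ι → ℝ) : ∑ i, ∑ j, K i j ^ 2 * f i j = ∑ i, ∑ j, K i j ^ 2 * f j i := by
    rw [Finset.sum_comm]
    refine Finset.sum_congr rfl fun i _ => Finset.sum_congr rfl fun j _ => ?_
    rw [show K j i = K i j from congrFun₂ hK i j]
  rw [hconj, h0]
  have hs1 := hswap fun i j => d j ^ a * d i ^ b
  have hs2 := hswap fun i _ => d i ^ (a + b)
  have : ∑ i, ∑ j, (K i j ^ 2 * (d j ^ a * d i ^ b) + K i j ^ 2 * (d i ^ a * d j ^ b))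
      ≤ ∑ i, ∑ j, (K i j ^ 2 * d i ^ (a + b) + K i j ^ 2 * d j ^ (a + b)) := by
    refine Finset.sum_le_sum fun i _ => Finset.sum_le_sum fun j _ => ?_
    rw [← mul_add, ← mul_add]
    refine mul_le_mul_of_nonneg_left ?_ (sq_nonneg _)
    linarith [pow_mul_pow_add_pow_mul_pow_le hab (d j) (d i)]
  simp only [Finset.sum_add_distrib] at this
  linarith

lemma Matrix.IsHermitian.trace_mul_pow_even_le {X V : Matrix ι ι ℝ} (hX : X.IsHermitian)
    (hV : (1 - V).PosSemidef) (p : ℕ) :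
    (V * X ^ (2 * p)).trace ≤ (X ^ (2 * p)).trace := by
  have hXp : (X ^ p)ᴴ = X ^ p := by rw [conjTranspose_pow, hX]
  have h := (hV.conjTranspose_mul_mul_same (X ^ p)).trace_nonneg
  rw [hXp, trace_mul_comm, ← Matrix.mul_assoc, ← pow_add, ← two_mul, trace_mul_comm,
    Matrix.sub_mul, trace_sub, Matrix.one_mul] at h
  linarith

open scoped Matrix.Norms.L2Operator in
lemma Matrix.l2_opNorm_sq_pow_le_trace {n m : ℕ} (hm : 1 ≤ m) (G : Matrix (Fin n) (Fin m) ℝ)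
    (p : ℕ) : (‖G‖ ^ 2) ^ p ≤ ((Gᵀ * G) ^ p).trace := by
  have hpsd : (Gᵀ * G).PosSemidef := by
    simpa using posSemidef_conjTranspose_mul_self G
  have hA := hpsd.isHermitian
  obtain ⟨U, hU, hpow⟩ := hA.exists_pow_eq_conj_diagonal
  have hU' : Uᵀ ∈ unitary (Matrix (Fin m) (Fin m) ℝ) := by
    rw [Unitary.mem_iff]
    simpa [star_eq_conjTranspose] using ⟨mul_eq_one_comm.mp hU, hU⟩
  have hU'' : U ∈ unitary (Matrix (Fin m) (Fin m) ℝ) := by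
    rw [Unitary.mem_iff]
    simpa [star_eq_conjTranspose] using ⟨hU, mul_eq_one_comm.mp hU⟩
  have hnorm : ‖G‖ ^ 2 = ‖hA.eigenvalues‖ := by
    have h1 := l2_opNorm_conjTranspose_mul_self G
    have h2 := hpow 1
    simp only [pow_one] at h2
    rw [conjTranspose_eq_transpose_of_trivial] at h1
    rw [sq, ← h1, ← l2_opNorm_diagonal]
    nth_rw 1 [h2]
    rw [CStarRing.norm_mul_mem_unitary _ hU', CStarRing.norm_mem_unitary_mul _ hU'']
  have : Nonempty (Fin m) := ⟨⟨0, hm⟩⟩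
  obtain ⟨i, hi⟩ := Finite.exists_max fun i => ‖hA.eigenvalues i‖
  have hi' : ‖hA.eigenvalues‖ ≤ ‖hA.eigenvalues i‖ :=
    (pi_norm_le_iff_of_nonneg (norm_nonneg _)).2 hi
  rw [hnorm]
  refine (pow_le_pow_left₀ (norm_nonneg _) hi' p).trans ?_
  rw [Real.norm_of_nonneg (hpsd.eigenvalues_nonneg i), hpow p, trace_mul_comm,
    ← Matrix.mul_assoc, hU, Matrix.one_mul, trace_diagonal]
  exact Finset.single_le_sum (f := fun i => hA.eigenvalues i ^ p)
    (fun j _ => pow_nonneg (hpsd.eigenvalues_nonneg j) p) (Finset.mem_univ i)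

end TraceInequalities

section GaussianSeries

variable {ι κ : Type*}

lemma Matrix.map_derivation_mul [Fintype ι] {R : Type*} [CommRing R] [Algebra ℝ R] (D : Derivation ℝ R R)
    (A B : Matrix ι ι R) : (A * B).map D = A.map D * B + A * B.map D := by
  ext i j
  simp only [map_apply, mul_apply, add_apply, map_sum, Derivation.leibniz, smul_eq_mul,
    ← Finset.sum_add_distrib]
  exact Finset.sum_congr rfl fun _ _ => by ring

lemma Matrix.map_derivation_pow [Fintype ι] [DecidableEq ι] {R : Type*} [CommRing R] [Algebra ℝ R] (D : Derivation ℝ R R)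
    (A : Matrix ι ι R) (N : ℕ) :
    (A ^ N).map D = ∑ q ∈ Finset.range N, A ^ q * A.map D * A ^ (N - 1 - q) := by
  induction N with
  | zero =>
    ext i j
    by_cases h : i = j <;> simp [h]
  | succ N ih =>
    rw [pow_succ, map_derivation_mul, ih, Finset.sum_range_succ, Finset.sum_mul]
    congr 1
    · refine Finset.sum_congr rfl fun q hq => ?_
      have : N + 1 - 1 - q = N - 1 - q + 1 := by
        have := Finset.mem_range.1 hq
        omega
      rw [this, pow_succ, Matrix.mul_assoc _ (A ^ _) A]
    · simp

/-- The matrix series `∑ₖ zₖ Hₖ` with indeterminate coefficients. -/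
noncomputable def genericSeries [Fintype κ] (H : κ → Matrix ι ι ℝ) : Matrix ι ι (MvPolynomial κ ℝ) :=
  ∑ k, (MvPolynomial.X k : MvPolynomial κ ℝ) • (H k).map MvPolynomial.C

lemma mapMatrix_eval_C [Fintype ι] [DecidableEq ι] (z : κ → ℝ) (A : Matrix ι ι ℝ) :
    (MvPolynomial.eval z).mapMatrix (A.map MvPolynomial.C) = A := by
  ext i j
  simp

lemma mapMatrix_eval_genericSeries [Fintype ι] [DecidableEq ι] [Fintype κ]
    (H : κ → Matrix ι ι ℝ) (z : κ → ℝ) :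
    (MvPolynomial.eval z).mapMatrix (genericSeries H) = ∑ k, z k • H k := by
  ext i j
  simp [genericSeries, Matrix.sum_apply]

lemma map_pderiv_genericSeries [Fintype κ] (H : κ → Matrix ι ι ℝ) (k : κ) :
    (genericSeries H).map (MvPolynomial.pderiv k) = (H k).map MvPolynomial.C := by
  classical
  ext i j : 1
  simp only [map_apply, genericSeries, Matrix.sum_apply, Matrix.smul_apply, smul_eq_mul, map_sum,
    MvPolynomial.pderiv_mul, MvPolynomial.pderiv_C, MvPolynomial.pderiv_X, mul_zero, add_zero]
  rw [Finset.sum_eq_single k (fun b _ hb => by simp [hb]) (by simp)]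
  simp

lemma eval_trace [Fintype ι] [DecidableEq ι] (z : κ → ℝ) (A : Matrix ι ι (MvPolynomial κ ℝ)) :
    MvPolynomial.eval z A.trace = ((MvPolynomial.eval z).mapMatrix A).trace := by
  simp [trace, map_sum]

lemma isHermitian_series [Fintype κ] {H : κ → Matrix ι ι ℝ} (hH : ∀ k, (H k)ᵀ = H k)
    (z : κ → ℝ) :
    (∑ k, z k • H k).IsHermitian := by
  simp [IsHermitian, conjTranspose_eq_transpose_of_trivial, transpose_sum, hH]

variable [Fintype ι] [DecidableEq ι] [Fintype κ]

lemma integrable_trace_mapMatrix_eval (A : Matrix ι ι (MvPolynomial κ ℝ)) :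
    Integrable (fun z => ((MvPolynomial.eval z).mapMatrix A).trace)
      (Measure.pi fun _ : κ => gaussianReal 0 1) := by
  simp only [← eval_trace]
  exact integrable_eval_pi_gaussianReal A.trace

lemma integrable_trace_series_pow (H : κ → Matrix ι ι ℝ) (N : ℕ) :
    Integrable (fun z => ((∑ k, z k • H k) ^ N).trace)
      (Measure.pi fun _ : κ => gaussianReal 0 1) := by
  refine (integrable_trace_mapMatrix_eval (genericSeries H ^ N)).congr (ae_of_all _ fun z => ?_)
  simp only [map_pow, mapMatrix_eval_genericSeries]

lemma integrable_trace_mul_series_pow (H : κ → Matrix ι ι ℝ) (A B : Matrix ι ι ℝ) (a b : ℕ) :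
    Integrable (fun z => (A * ((∑ k, z k • H k) ^ a * B * (∑ k, z k • H k) ^ b)).trace)
      (Measure.pi fun _ : κ => gaussianReal 0 1) := by
  refine (integrable_trace_mapMatrix_eval (A.map MvPolynomial.C * (genericSeries H ^ a *
    B.map MvPolynomial.C * genericSeries H ^ b))).congr (ae_of_all _ fun z => ?_)
  simp only [map_mul, map_pow, mapMatrix_eval_genericSeries, mapMatrix_eval_C]

/-- Gaussian integration by parts for the trace of a power of a Gaussian matrix series. -/
lemma integral_trace_series_pow_succ (H : κ → Matrix ι ι ℝ) (N : ℕ) :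
    ∫ z, ((∑ k, z k • H k) ^ (N + 1)).trace ∂(Measure.pi fun _ : κ => gaussianReal 0 1)
      = ∑ k, ∑ q ∈ Finset.range N,
        ∫ z, (H k * ((∑ k, z k • H k) ^ q * H k * (∑ k, z k • H k) ^ (N - 1 - q))).trace
          ∂(Measure.pi fun _ : κ => gaussianReal 0 1) := by
  let P (k : κ) : MvPolynomial κ ℝ := ((H k).map MvPolynomial.C * genericSeries H ^ N).trace
  have hP (k : κ) (z : κ → ℝ) :
      MvPolynomial.eval z (P k) = (H k * (∑ k, z k • H k) ^ N).trace := by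
    simp only [P, eval_trace, map_mul, map_pow, mapMatrix_eval_genericSeries, mapMatrix_eval_C]
  have hleft (z : κ → ℝ) : ((∑ k, z k • H k) ^ (N + 1)).trace
      = ∑ k, z k * MvPolynomial.eval z (P k) := by
    simp only [hP]
    rw [pow_succ', Finset.sum_mul, trace_sum]
    simp
  have hD (k : κ) (z : κ → ℝ) : MvPolynomial.eval z (MvPolynomial.pderiv k (P k))
      = ∑ q ∈ Finset.range N,
        (H k * ((∑ k, z k • H k) ^ q * H k * (∑ k, z k • H k) ^ (N - 1 - q))).trace := by
    have h1 : MvPolynomial.pderiv k (P k)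
        = (((H k).map MvPolynomial.C * genericSeries H ^ N).map (MvPolynomial.pderiv k)).trace := by
      simp [P, trace, map_sum]
    have h0 : ((H k).map MvPolynomial.C).map (MvPolynomial.pderiv k)
        = (0 : Matrix ι ι (MvPolynomial κ ℝ)) := by
      ext i j : 1
      simp
    rw [h1, map_derivation_mul, map_derivation_pow, map_pderiv_genericSeries, h0, Matrix.zero_mul,
      zero_add, eval_trace]
    simp only [map_mul, map_sum, map_pow, mapMatrix_eval_genericSeries, mapMatrix_eval_C,
      Finset.mul_sum, trace_sum]
  have hInt (k : κ) : Integrable (fun z : κ → ℝ => z k * MvPolynomial.eval z (P k))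
      (Measure.pi fun _ : κ => gaussianReal 0 1) := by
    refine (integrable_eval_pi_gaussianReal (MvPolynomial.X k * P k)).congr
      (ae_of_all _ fun z => ?_)
    simp only [map_mul, MvPolynomial.eval_X]
  simp only [hleft]
  rw [integral_finsetSum _ fun k _ => hInt k]
  refine Finset.sum_congr rfl fun k _ => ?_
  rw [integral_mul_eval_pi_gaussianReal]
  simp only [hD]
  rw [integral_finsetSum _ fun q _ => integrable_trace_mul_series_pow ..]

lemma integral_trace_series_sq (H : κ → Matrix ι ι ℝ) :
    ∫ z, ((∑ k, z k • H k) ^ 2).trace ∂(Measure.pi fun _ : κ => gaussianReal 0 1)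
      = (∑ k, H k * H k).trace := by
  simp [integral_trace_series_pow_succ H 1, trace_sum]

lemma integral_trace_series_pow_succ_succ_le {H : κ → Matrix ι ι ℝ} (hH : ∀ k, (H k)ᵀ = H k)
    (hV : (1 - ∑ k, H k * H k).PosSemidef) (p : ℕ) :
    ∫ z, ((∑ k, z k • H k) ^ (2 * (p + 1))).trace ∂(Measure.pi fun _ : κ => gaussianReal 0 1)
      ≤ (2 * p + 1) *
        ∫ z, ((∑ k, z k • H k) ^ (2 * p)).trace ∂(Measure.pi fun _ : κ => gaussianReal 0 1) := by
  have hInt (k : κ) : Integrable (fun z => (H k * H k * (∑ k, z k • H k) ^ (2 * p)).trace)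
      (Measure.pi fun _ : κ => gaussianReal 0 1) := by
    simpa using integrable_trace_mul_series_pow H (H k * H k) 1 0 (2 * p)
  calc _ = ∑ k, ∑ q ∈ Finset.range (2 * p + 1),
        ∫ z, (H k * ((∑ k, z k • H k) ^ q * H k * (∑ k, z k • H k) ^ (2 * p + 1 - 1 - q))).trace
          ∂(Measure.pi fun _ : κ => gaussianReal 0 1) :=
        integral_trace_series_pow_succ H (2 * p + 1)
    _ ≤ ∑ k, ∑ q ∈ Finset.range (2 * p + 1), ∫ z, (H k * H k * (∑ k, z k • H k) ^ (2 * p)).trace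
          ∂(Measure.pi fun _ : κ => gaussianReal 0 1) := by
        refine Finset.sum_le_sum fun k _ => Finset.sum_le_sum fun q hq => ?_
        refine integral_mono (integrable_trace_mul_series_pow ..) (hInt k) fun z => ?_
        have hsum : q + (2 * p + 1 - 1 - q) = 2 * p := by
          have := Finset.mem_range.1 hq
          omega
        have := (isHermitian_series hH z).trace_mul_pow_mul_pow_le (hH k)
          (a := q) (b := 2 * p + 1 - 1 - q) (by rw [hsum]; exact even_two_mul p)
        rwa [hsum] at this
    _ = (2 * p + 1) * ∫ z, ((∑ k, H k * H k) * (∑ k, z k • H k) ^ (2 * p)).trace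
          ∂(Measure.pi fun _ : κ => gaussianReal 0 1) := by
        simp only [Finset.sum_mul, trace_sum]
        rw [integral_finsetSum _ fun k _ => hInt k]
        simp [Finset.mul_sum]
    _ ≤ _ := by
        refine mul_le_mul_of_nonneg_left ?_ (by positivity)
        refine integral_mono ?_ (integrable_trace_series_pow H _) fun z =>
          (isHermitian_series hH z).trace_mul_pow_even_le hV p
        simpa using integrable_trace_mul_series_pow H (∑ k, H k * H k) 1 0 (2 * p)

lemma integral_trace_series_even_pow_le {H : κ → Matrix ι ι ℝ} (hH : ∀ k, (H k)ᵀ = H k)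
    (hV : (1 - ∑ k, H k * H k).PosSemidef) (p : ℕ) :
    ∫ z, ((∑ k, z k • H k) ^ (2 * (p + 1))).trace ∂(Measure.pi fun _ : κ => gaussianReal 0 1)
      ≤ (∑ k, H k * H k).trace *
        ((2 * (p + 1)).factorial / (2 ^ (p + 1) * (p + 1).factorial)) := by
  induction p with
  | zero => simp [integral_trace_series_sq]
  | succ p ih =>
    refine (integral_trace_series_pow_succ_succ_le hH hV (p + 1)).trans ?_
    refine (mul_le_mul_of_nonneg_left ih (by positivity)).trans_eq ?_
    rw [show 2 * (p + 1 + 1) = 2 * (p + 1) + 1 + 1 by ring, Nat.factorial_succ (2 * (p + 1) + 1),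
      Nat.factorial_succ (2 * (p + 1)), Nat.factorial_succ (p + 1), pow_succ 2 (p + 1)]
    push_cast
    field_simp
    ring

end GaussianSeries

section HermitianDilation

/-- The Hermitian dilation of a rectangular matrix. -/
def hermitianDilation {n m : ℕ} (B : Matrix (Fin n) (Fin m) ℝ) :
    Matrix (Fin n ⊕ Fin m) (Fin n ⊕ Fin m) ℝ :=
  fromBlocks 0 B Bᵀ 0

variable {n m r : ℕ}

lemma transpose_hermitianDilation (B : Matrix (Fin n) (Fin m) ℝ) :
    (hermitianDilation B)ᵀ = hermitianDilation B := by
  simp [hermitianDilation, fromBlocks_transpose]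

lemma sum_smul_hermitianDilation (B : Fin r → Matrix (Fin n) (Fin m) ℝ) (z : Fin r → ℝ) :
    ∑ k, z k • hermitianDilation (B k) = hermitianDilation (∑ k, z k • B k) := by
  ext (i | i) (j | j) <;> simp [hermitianDilation, Matrix.sum_apply]

lemma hermitianDilation_mul_self (B : Matrix (Fin n) (Fin m) ℝ) :
    hermitianDilation B * hermitianDilation B = fromBlocks (B * Bᵀ) 0 0 (Bᵀ * B) := by
  simp [hermitianDilation, fromBlocks_multiply]

lemma hermitianDilation_pow_two_mul (B : Matrix (Fin n) (Fin m) ℝ) (p : ℕ) :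
    hermitianDilation B ^ (2 * p) = fromBlocks ((B * Bᵀ) ^ p) 0 0 ((Bᵀ * B) ^ p) := by
  induction p with
  | zero => simp
  | succ p ih =>
    rw [mul_add, mul_one, pow_add, ih, sq, hermitianDilation_mul_self, fromBlocks_multiply]
    simp [pow_succ]

lemma trace_mul_transpose_pow_succ (B : Matrix (Fin n) (Fin m) ℝ) (p : ℕ) :
    ((B * Bᵀ) ^ (p + 1)).trace = ((Bᵀ * B) ^ (p + 1)).trace := by
  have h : (B * Bᵀ) ^ (p + 1) = B * ((Bᵀ * B) ^ p * Bᵀ) := by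
    induction p with
    | zero => simp
    | succ p ih => rw [pow_succ, ih, pow_succ]; simp only [Matrix.mul_assoc]
  rw [h, trace_mul_comm, Matrix.mul_assoc, pow_succ]

lemma trace_fromBlocks_eq (A : Matrix (Fin n) (Fin n) ℝ) (B : Matrix (Fin n) (Fin m) ℝ)
    (C : Matrix (Fin m) (Fin n) ℝ) (D : Matrix (Fin m) (Fin m) ℝ) :
    (fromBlocks A B C D).trace = A.trace + D.trace := by
  simp [trace, Fintype.sum_sum_type]

lemma trace_hermitianDilation_pow (B : Matrix (Fin n) (Fin m) ℝ) (p : ℕ) :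
    (hermitianDilation B ^ (2 * (p + 1))).trace = 2 * ((Bᵀ * B) ^ (p + 1)).trace := by
  rw [hermitianDilation_pow_two_mul, trace_fromBlocks_eq, trace_mul_transpose_pow_succ, two_mul]

lemma sum_hermitianDilation_mul_self (B : Fin r → Matrix (Fin n) (Fin m) ℝ) :
    ∑ k, hermitianDilation (B k) * hermitianDilation (B k)
      = fromBlocks (∑ k, B k * (B k)ᵀ) 0 0 (∑ k, (B k)ᵀ * B k) := by
  simp only [hermitianDilation_mul_self]
  ext (i | i) (j | j) <;> simp [Matrix.sum_apply]

lemma posSemidef_one_sub_sum_hermitianDilation {B : Fin r → Matrix (Fin n) (Fin m) ℝ}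
    (hBtB : ∑ k, (B k)ᵀ * B k = 1)
    (hBBt : ((1 : Matrix (Fin n) (Fin n) ℝ) - ∑ k, B k * (B k)ᵀ).PosSemidef) :
    (1 - ∑ k, hermitianDilation (B k) * hermitianDilation (B k)).PosSemidef := by
  have h : 1 - ∑ k, hermitianDilation (B k) * hermitianDilation (B k)
      = fromBlocks (1 - ∑ k, B k * (B k)ᵀ) 0 0ᴴ (0 : Matrix (Fin m) (Fin m) ℝ) := by
    rw [sum_hermitianDilation_mul_self, hBtB, ← fromBlocks_one]
    ext (i | i) (j | j) <;> simp [- fromBlocks_one]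
  have h' : fromBlocks (1 - ∑ k, B k * (B k)ᵀ) 0 0ᴴ (0 : Matrix (Fin m) (Fin m) ℝ)
      = (fromCols 1 0 : Matrix (Fin n) (Fin n ⊕ Fin m) ℝ)ᴴ *
        (1 - ∑ k, B k * (B k)ᵀ) * (fromCols 1 0 : Matrix (Fin n) (Fin n ⊕ Fin m) ℝ) := by
    rw [conjTranspose_fromCols_eq_fromRows_conjTranspose, fromRows_mul, fromRows_mul_fromCols]
    simp
  rw [h, h']
  exact hBBt.conjTranspose_mul_mul_same _

lemma trace_sum_hermitianDilation {B : Fin r → Matrix (Fin n) (Fin m) ℝ}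
    (hBtB : ∑ k, (B k)ᵀ * B k = 1) :
    (∑ k, hermitianDilation (B k) * hermitianDilation (B k)).trace = 2 * m := by
  have h : (∑ k, B k * (B k)ᵀ).trace = (∑ k, (B k)ᵀ * B k).trace := by
    simp only [trace_sum]
    exact Finset.sum_congr rfl fun k _ => trace_mul_comm _ _
  rw [sum_hermitianDilation_mul_self, trace_fromBlocks_eq, h, hBtB]
  simp [two_mul]

lemma integrable_trace_gram_pow (B : Fin r → Matrix (Fin n) (Fin m) ℝ) (p : ℕ) :
    Integrable (fun z => (((∑ k, z k • B k)ᵀ * ∑ k, z k • B k) ^ p).trace)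
      (Measure.pi fun _ : Fin r => gaussianReal 0 1) := by
  cases p with
  | zero => simp
  | succ p =>
    have h := integrable_trace_series_pow (fun k => hermitianDilation (B k)) (2 * (p + 1))
    simp only [sum_smul_hermitianDilation, trace_hermitianDilation_pow] at h
    simpa using h.const_mul (1 / 2)

lemma integral_trace_gram_pow_le {B : Fin r → Matrix (Fin n) (Fin m) ℝ}
    (hBtB : ∑ k, (B k)ᵀ * B k = 1)
    (hBBt : ((1 : Matrix (Fin n) (Fin n) ℝ) - ∑ k, B k * (B k)ᵀ).PosSemidef) (p : ℕ) :
    ∫ z, (((∑ k, z k • B k)ᵀ * ∑ k, z k • B k) ^ p).trace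
        ∂(Measure.pi fun _ : Fin r => gaussianReal 0 1)
      ≤ m * ((2 * p).factorial / (2 ^ p * p.factorial)) := by
  cases p with
  | zero => simp
  | succ p =>
    have h := integral_trace_series_even_pow_le
      (fun k => transpose_hermitianDilation (B k))
      (posSemidef_one_sub_sum_hermitianDilation hBtB hBBt) p
    rw [trace_sum_hermitianDilation hBtB] at h
    simp only [sum_smul_hermitianDilation, trace_hermitianDilation_pow, integral_const_mul] at h
    linarith

end HermitianDilation

section SubGaussianMoments

variable {Ω : Type*} [MeasurableSpace Ω] {μ : Measure Ω}

lemma lintegral_cosh_le_of_moments {σ : Ω → ℝ} (hσ : Measurable σ) {c : ℝ} (hc : 0 ≤ c)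
    (hInt : ∀ p : ℕ, Integrable (fun ω => (σ ω ^ 2) ^ p) μ)
    (hmom : ∀ p : ℕ, ∫ ω, (σ ω ^ 2) ^ p ∂μ ≤ c * ((2 * p).factorial / (2 ^ p * p.factorial)))
    (t : ℝ) :
    ∫⁻ ω, ENNReal.ofReal (Real.cosh (t * σ ω)) ∂μ
      ≤ ENNReal.ofReal (c * Real.exp (t ^ 2 / 2)) := by
  have hterm (p : ℕ) (ω : Ω) : (t * σ ω) ^ (2 * p) / (2 * p).factorial
      = (t ^ 2) ^ p / (2 * p).factorial * (σ ω ^ 2) ^ p := by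
    rw [mul_pow, pow_mul, pow_mul]
    ring
  have hcosh (ω : Ω) : ENNReal.ofReal (Real.cosh (t * σ ω))
      = ∑' p : ℕ, ENNReal.ofReal ((t ^ 2) ^ p / (2 * p).factorial * (σ ω ^ 2) ^ p) := by
    have h := Real.hasSum_cosh (t * σ ω)
    simp only [hterm] at h
    rw [← h.tsum_eq, ENNReal.ofReal_tsum_of_nonneg (fun p => by positivity) h.summable]
  have hexp : HasSum (fun p : ℕ => c * ((t ^ 2 / 2) ^ p / p.factorial))
      (c * Real.exp (t ^ 2 / 2)) := by
    rw [Real.exp_eq_exp_ℝ]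
    exact (NormedSpace.expSeries_div_hasSum_exp (t ^ 2 / 2)).mul_left c
  simp only [hcosh]
  rw [lintegral_tsum fun p => by fun_prop, ← hexp.tsum_eq,
    ENNReal.ofReal_tsum_of_nonneg (fun p => by positivity) hexp.summable]
  refine ENNReal.tsum_le_tsum fun p => ?_
  rw [← ofReal_integral_eq_lintegral_ofReal ((hInt p).const_mul _)
    (ae_of_all _ fun ω => by positivity), integral_const_mul]
  refine ENNReal.ofReal_le_ofReal
    ((mul_le_mul_of_nonneg_left (hmom p) (by positivity)).trans_eq ?_)
  rw [div_pow]
  field_simp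

lemma measureReal_le_sq_le_of_moments [IsProbabilityMeasure μ] {σ : Ω → ℝ} (hσ : Measurable σ)
    (hσ0 : ∀ ω, 0 ≤ σ ω) {c : ℝ} (hc : 0 ≤ c)
    (hInt : ∀ p : ℕ, Integrable (fun ω => (σ ω ^ 2) ^ p) μ)
    (hmom : ∀ p : ℕ, ∫ ω, (σ ω ^ 2) ^ p ∂μ ≤ c * ((2 * p).factorial / (2 ^ p * p.factorial)))
    {u : ℝ} (hu : 0 ≤ u) :
    μ.real {ω | u ≤ σ ω ^ 2} ≤ 2 * c * Real.exp (-(1 / 2) * u) := by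
  have hsub : {ω | u ≤ σ ω ^ 2} ⊆ {ω | ENNReal.ofReal (Real.exp u / 2)
      ≤ ENNReal.ofReal (Real.cosh (√u * σ ω))} := fun ω hω => by
    refine ENNReal.ofReal_le_ofReal ?_
    have h1 : √u ≤ σ ω := (Real.sqrt_le_left (hσ0 ω)).2 hω
    have h2 : u ≤ √u * σ ω :=
      calc u = √u * √u := (Real.mul_self_sqrt hu).symm
        _ ≤ √u * σ ω := mul_le_mul_of_nonneg_left h1 (Real.sqrt_nonneg u)
    rw [Real.cosh_eq]
    have h3 := Real.exp_le_exp.2 h2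
    have h4 := Real.exp_pos (-(√u * σ ω))
    linarith
  have hmarkov := (mul_meas_ge_le_lintegral (μ := μ)
    (f := fun ω => ENNReal.ofReal (Real.cosh (√u * σ ω)))
    (by fun_prop) (ENNReal.ofReal (Real.exp u / 2))).trans
      (lintegral_cosh_le_of_moments hσ hc hInt hmom √u)
  have h := (mul_le_mul_right (measure_mono hsub) (ENNReal.ofReal (Real.exp u / 2))).trans hmarkov
  rw [← ofReal_measureReal, ← ENNReal.ofReal_mul (by positivity),
    ENNReal.ofReal_le_ofReal_iff (by positivity), Real.sq_sqrt hu] at h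
  have hexp : Real.exp (u / 2) = Real.exp u * Real.exp (-(1 / 2) * u) := by
    rw [← Real.exp_add]
    ring_nf
  rw [hexp] at h
  have hpos := Real.exp_pos u
  refine le_of_mul_le_mul_left ?_ (half_pos hpos)
  linarith

lemma integral_sq_le_of_moments [IsProbabilityMeasure μ] {σ : Ω → ℝ} (hσ : Measurable σ)
    (hσ0 : ∀ ω, 0 ≤ σ ω) {c : ℝ} (hc : 1 ≤ c)
    (hInt : ∀ p : ℕ, Integrable (fun ω => (σ ω ^ 2) ^ p) μ)
    (hmom : ∀ p : ℕ, ∫ ω, (σ ω ^ 2) ^ p ∂μ ≤ c * ((2 * p).factorial / (2 ^ p * p.factorial))) :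
    ∫ ω, σ ω ^ 2 ∂μ ≤ 2 * Real.log (2 * c) + 2 := by
  have hInt1 : Integrable (fun ω => σ ω ^ 2) μ := by simpa using hInt 1
  set L := 2 * Real.log (2 * c) with hL
  have hL0 : 0 ≤ L := mul_nonneg zero_le_two (Real.log_nonneg (by linarith))
  set F : ℝ → ℝ := fun u => μ.real {ω | u ≤ σ ω ^ 2} with hF
  have hFanti : Antitone F := fun a b hab => measureReal_mono fun ω hω => hab.trans hω
  have hexpint : IntegrableOn (fun u => 2 * c * Real.exp (-(1 / 2) * u)) (Set.Ioi L) :=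
    (integrableOn_exp_mul_Ioi (by norm_num) L).const_mul _
  have htail : ∀ u ∈ Set.Ioi L, F u ≤ 2 * c * Real.exp (-(1 / 2) * u) := fun u hu =>
    measureReal_le_sq_le_of_moments hσ hσ0 (by linarith) hInt hmom (hL0.trans (le_of_lt hu))
  have hFint1 : IntegrableOn F (Set.Ioc 0 L) :=
    (hFanti.antitoneOn _).integrableOn_isCompact isCompact_Icc |>.mono_set Set.Ioc_subset_Icc_self
  have hFint2 : IntegrableOn F (Set.Ioi L) := by
    refine hexpint.mono' hFanti.measurable.aestronglyMeasurable ?_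
    filter_upwards [ae_restrict_mem measurableSet_Ioi] with u hu
    rw [Real.norm_of_nonneg measureReal_nonneg]
    exact htail u hu
  have hI1 : ∫ u in Set.Ioc 0 L, F u ≤ L := by
    have h := setIntegral_mono (g := fun _ => (1 : ℝ)) hFint1 (by simp) fun u => measureReal_le_one
    simpa [hL0] using h
  have hI2 : ∫ u in Set.Ioi L, F u ≤ 2 := by
    refine (setIntegral_mono_on hFint2 hexpint measurableSet_Ioi htail).trans_eq ?_
    rw [integral_const_mul, integral_exp_mul_Ioi (by norm_num)]
    have : Real.exp (-(1 / 2) * L) = (2 * c)⁻¹ := by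
      rw [hL, show -(1 / 2) * (2 * Real.log (2 * c)) = -Real.log (2 * c) by ring, Real.exp_neg,
        Real.exp_log (by linarith)]
    rw [this]
    field_simp
  rw [hInt1.integral_eq_integral_meas_le (ae_of_all _ fun ω => sq_nonneg _),
    ← Set.Ioc_union_Ioi_eq_Ioi hL0,
    setIntegral_union (Set.Ioc_disjoint_Ioi le_rfl) measurableSet_Ioi hFint1 hFint2]
  exact add_le_add hI1 hI2

end SubGaussianMoments

lemma continuous_sigmaMax_series {n m r : ℕ} (B : Fin r → Matrix (Fin n) (Fin m) ℝ) :
    Continuous fun z : Fin r → ℝ => sigmaMax (∑ k, z k • B k) := by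
  simp only [sigmaMax, map_sum, map_smul]
  fun_prop

/-- Lemma 2.1, expectation bound.
For a Gaussian matrix series `G = ∑ₖ zₖ Bₖ` with `∑ₖ Bₖᵀ Bₖ = Iₘ` and
`∑ₖ Bₖ Bₖᵀ ⪯ Iₙ`, we have `E[σmax(G)²] ≤ min(m, 2 log(2m) + 2)`. -/
theorem stmt1 {n m r : ℕ} (hm : 1 ≤ m) (hmn : m ≤ n)
    (B : Fin r → Matrix (Fin n) (Fin m) ℝ)
    (hBtB : ∑ k, (B k)ᵀ * B k = 1)
    (hBBt : ((1 : Matrix (Fin n) (Fin n) ℝ) - ∑ k, B k * (B k)ᵀ).PosSemidef)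
    {Ω : Type*} [MeasurableSpace Ω] (μ : Measure Ω) [IsProbabilityMeasure μ]
    (z : Fin r → Ω → ℝ)
    (hindep : iIndepFun z μ)
    (hgauss : ∀ k, Measure.map (z k) μ = gaussianReal 0 1) :
    ∫ ω, (sigmaMax (∑ k, z k ω • B k)) ^ 2 ∂μ
      ≤ min (m : ℝ) (2 * Real.log (2 * m) + 2) := by
  have hz (k : Fin r) : AEMeasurable (z k) μ := by
    refine AEMeasurable.of_map_ne_zero ?_
    rw [hgauss k]
    exact IsProbabilityMeasure.ne_zero _
  have hlaw : μ.map (fun ω k => z k ω) = Measure.pi fun _ : Fin r => gaussianReal 0 1 := by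
    rw [(iIndepFun_iff_map_fun_eq_pi_map hz).1 hindep]
    simp only [hgauss]
  have hcont := continuous_sigmaMax_series B
  have hle (p : ℕ) (x : Fin r → ℝ) : (sigmaMax (∑ k, x k • B k) ^ 2) ^ p
      ≤ (((∑ k, x k • B k)ᵀ * ∑ k, x k • B k) ^ p).trace :=
    Matrix.l2_opNorm_sq_pow_le_trace hm _ p
  have hInt (p : ℕ) : Integrable (fun x : Fin r → ℝ => (sigmaMax (∑ k, x k • B k) ^ 2) ^ p)
      (Measure.pi fun _ : Fin r => gaussianReal 0 1) := by
    refine (integrable_trace_gram_pow B p).mono'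
      ((hcont.pow 2).pow p).aestronglyMeasurable (ae_of_all _ fun x => ?_)
    rw [Real.norm_of_nonneg (by positivity)]
    exact hle p x
  have hmom (p : ℕ) : ∫ x : Fin r → ℝ, (sigmaMax (∑ k, x k • B k) ^ 2) ^ p
        ∂(Measure.pi fun _ : Fin r => gaussianReal 0 1)
      ≤ m * ((2 * p).factorial / (2 ^ p * p.factorial)) :=
    (integral_mono (hInt p) (integrable_trace_gram_pow B p) (hle p)).trans
      (integral_trace_gram_pow_le hBtB hBBt p)
  have htransfer : ∫ ω, (sigmaMax (∑ k, z k ω • B k)) ^ 2 ∂μ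
      = ∫ x : Fin r → ℝ, sigmaMax (∑ k, x k • B k) ^ 2
        ∂(Measure.pi fun _ : Fin r => gaussianReal 0 1) := by
    rw [← hlaw]
    exact (integral_map (aemeasurable_pi_lambda _ hz) (hcont.pow 2).aestronglyMeasurable).symm
  rw [htransfer]
  refine le_min (by simpa using hmom 1) ?_
  exact integral_sq_le_of_moments hcont.measurable (fun x => norm_nonneg _)
    (by exact_mod_cast hm) hInt hmom
end

section
/- Let n ≥ m ≥ 1 with nm ≥ 2, and let B_1,…,B_r ∈ ℝ^{n×m} satisfy Σ_{k=1}^r B_k^⊤B_k = I_m and Σ_{k=1}^r B_kB_k^⊤ ⪯ I_n. Let z_1,…,z_r be independent standard Gaussian real random variables, set G = Σ_{k=1}^r z_k B_k, and let W = Σ_{k=1}^r vec(B_k)vec(B_k)^⊤. Define β_{n,m} := inf_{λ∈[0,1]} ∫₀^∞ (1 + 2tm(1−λ)/(nm−1))^{−(nm−1)/2} · (1 + 2tmλ)^{−3/2} dt. Then σmax(G) > 0 almost surely and for every v ∈ ℝ^{nm}, E[(v^⊤vec(G))²/σmax(G)²] ≥ β_{n,m} · v^⊤Wv. -/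
open MeasureTheory ProbabilityTheory Matrix

/-- `vec(U)`: stacking the columns of `U`, indexed by (column, row) pairs. -/
def vecM {n m : ℕ} (U : Matrix (Fin n) (Fin m) ℝ) : Fin m × Fin n → ℝ :=
  fun p => U p.2 p.1

/-- `β_{n,m} = inf_{λ∈[0,1]} ∫₀^∞ (1 + 2tm(1−λ)/(nm−1))^{−(nm−1)/2} (1 + 2tmλ)^{−3/2} dt`. -/
noncomputable def betaNM (n m : ℕ) : ℝ :=
  ⨅ l : Set.Icc (0 : ℝ) 1,
    ∫ t in Set.Ioi (0 : ℝ),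
      (1 + 2 * t * m * (1 - (l : ℝ)) / ((n : ℝ) * m - 1)) ^ (-(((n : ℝ) * m - 1) / 2))
        * (1 + 2 * t * m * (l : ℝ)) ^ (-(3 / 2 : ℝ))


theorem integral_mul_exp_neg_mul_sq_gaussianReal (f : ℝ → ℝ) (v : NNReal) {t : ℝ} (ht : 0 ≤ t) :
    ∫ x, f x * Real.exp (-t * x ^ 2) ∂gaussianReal 0 v
      = (1 + 2 * t * v) ^ (-(1 / 2) : ℝ)
        * ∫ x, f x ∂gaussianReal 0 (v / (1 + 2 * t.toNNReal * v)) := by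
  rcases eq_or_ne v 0 with rfl | hv
  · simp
  have hv' : (0 : ℝ) < v := by positivity
  have hd : (0 : ℝ) < 1 + 2 * t * v := by positivity
  have hw : v / (1 + 2 * t.toNNReal * v) ≠ 0 := by positivity
  rw [integral_gaussianReal_eq_integral_smul hv, integral_gaussianReal_eq_integral_smul hw,
    ← integral_const_mul]
  congr 1 with x
  simp only [gaussianPDFReal, smul_eq_mul, sub_zero, NNReal.coe_div, NNReal.coe_add,
    NNReal.coe_mul, NNReal.coe_one, NNReal.coe_ofNat, Real.coe_toNNReal t ht]
  have hexp : Real.exp (-x ^ 2 / (2 * (v / (1 + 2 * t * v))))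
      = Real.exp (-x ^ 2 / (2 * v)) * Real.exp (-t * x ^ 2) := by
    rw [← Real.exp_add]
    congr 1
    field_simp
    ring
  have hsqrt : (√(2 * Real.pi * (v / (1 + 2 * t * v))))⁻¹
      = (√(2 * Real.pi * v))⁻¹ * √(1 + 2 * t * v) := by
    rw [← mul_div_assoc, Real.sqrt_div (by positivity), inv_div, div_eq_inv_mul]
  rw [hexp, hsqrt, Real.rpow_neg hd.le, ← Real.sqrt_eq_rpow]
  have := (Real.sqrt_pos.2 hd).ne'
  field_simp

theorem integral_exp_neg_mul_sq_gaussianReal (v : NNReal) {t : ℝ} (ht : 0 ≤ t) :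
    ∫ x, Real.exp (-t * x ^ 2) ∂gaussianReal 0 v = (1 + 2 * t * v) ^ (-(1 / 2) : ℝ) := by
  simpa using integral_mul_exp_neg_mul_sq_gaussianReal (fun _ => 1) v ht

theorem integral_id_mul_exp_neg_mul_sq_gaussianReal (v : NNReal) {t : ℝ} (ht : 0 ≤ t) :
    ∫ x, x * Real.exp (-t * x ^ 2) ∂gaussianReal 0 v = 0 := by
  simpa using integral_mul_exp_neg_mul_sq_gaussianReal id v ht

theorem integral_sq_mul_exp_neg_mul_sq_gaussianReal (v : NNReal) {t : ℝ} (ht : 0 ≤ t) :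
    ∫ x, x ^ 2 * Real.exp (-t * x ^ 2) ∂gaussianReal 0 v
      = v * (1 + 2 * t * v) ^ (-(3 / 2) : ℝ) := by
  have hd : (0 : ℝ) < 1 + 2 * t * v := by positivity
  rw [integral_mul_exp_neg_mul_sq_gaussianReal (fun x => x ^ 2) v ht]
  have h2 := variance_of_integral_eq_zero (X := fun x : ℝ => x)
    (μ := gaussianReal 0 (v / (1 + 2 * t.toNNReal * v))) (by fun_prop) integral_id_gaussianReal
  rw [variance_fun_id_gaussianReal] at h2
  rw [← h2]
  simp only [NNReal.coe_div, NNReal.coe_add,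
    NNReal.coe_mul, NNReal.coe_one, NNReal.coe_ofNat, Real.coe_toNNReal t ht]
  rw [show (-(3 / 2) : ℝ) = -(1 / 2) - 1 by norm_num, Real.rpow_sub_one hd.ne']
  ring

theorem prod_one_add_le_pow {ι : Type*} (s : Finset ι) (hs : s.Nonempty) (w : ι → ℝ)
    (hw : ∀ i ∈ s, 0 ≤ w i) :
    ∏ i ∈ s, (1 + w i) ≤ (1 + (∑ i ∈ s, w i) / s.card) ^ s.card := by
  have hc : (0 : ℝ) < s.card := by exact_mod_cast hs.card_pos
  have h := Real.geom_mean_le_arith_mean s (fun _ => 1) (fun i => 1 + w i) (by simp)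
    (by simpa using hc) (fun i hi => by have := hw i hi; positivity)
  have hp : 0 ≤ ∏ i ∈ s, (1 + w i) := Finset.prod_nonneg fun i hi => by
    have := hw i hi
    positivity
  simp only [Real.rpow_one, Finset.sum_const, nsmul_eq_mul, mul_one, one_mul,
    Finset.sum_add_distrib, add_div, div_self hc.ne'] at h
  calc ∏ i ∈ s, (1 + w i) = ((∏ i ∈ s, (1 + w i)) ^ ((s.card : ℝ)⁻¹)) ^ s.card :=
        (Real.rpow_inv_natCast_pow hp hs.card_pos.ne').symm
    _ ≤ _ := pow_le_pow_left₀ (by positivity) h _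

theorem lintegral_mul_exp_neg_Ioi {a b : ℝ} (ha : 0 ≤ a) (hb : 0 < b) :
    ∫⁻ t in Set.Ioi (0 : ℝ), ENNReal.ofReal (a * Real.exp (-t * b)) = ENNReal.ofReal (a / b) := by
  have hi := integrableOn_exp_mul_Ioi (neg_lt_zero.2 hb) 0
  have hv := integral_exp_mul_Ioi (neg_lt_zero.2 hb) 0
  have e : ∀ t : ℝ, -t * b = -b * t := fun t => by ring
  simp only [e]
  rw [← ofReal_integral_eq_lintegral_ofReal (hi.const_mul a)
    (Filter.Eventually.of_forall fun t => by positivity), integral_const_mul, hv]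
  congr 1
  simp [div_eq_mul_inv]

theorem ofReal_integral_le_lintegral_ofReal {α : Type*} [MeasurableSpace α] (ν : Measure α)
    (f : α → ℝ) : ENNReal.ofReal (∫ x, f x ∂ν) ≤ ∫⁻ x, ENNReal.ofReal (f x) ∂ν := by
  by_cases hf : Integrable f ν
  · calc ENNReal.ofReal (∫ x, f x ∂ν) ≤ ENNReal.ofReal (∫ x, max (f x) 0 ∂ν) :=
          ENNReal.ofReal_le_ofReal (integral_mono hf hf.pos_part fun x => le_max_left _ _)
      _ = ∫⁻ x, ENNReal.ofReal (f x) ∂ν := by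
          rw [ofReal_integral_eq_lintegral_ofReal hf.pos_part
            (Filter.Eventually.of_forall fun x => le_max_right _ _)]
          simp [ENNReal.ofReal_max]
  · simp [integral_undef hf]

theorem lintegral_sq_sum_div_eq {ι : Type*} [Fintype ι] (ν : Measure (ι → ℝ)) [SFinite ν]
    (u : ι → ℝ) :
    ∫⁻ x, ENNReal.ofReal ((∑ i, u i * x i) ^ 2 / ∑ k, x k ^ 2) ∂ν
      = ∫⁻ t in Set.Ioi (0 : ℝ), ∫⁻ x, ENNReal.ofReal
          ((∑ i, u i * x i) ^ 2 * Real.exp (-t * ∑ k, x k ^ 2)) ∂ν := by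
  rw [lintegral_lintegral_swap]
  · refine lintegral_congr fun x => ?_
    rcases (Finset.sum_nonneg fun k _ => sq_nonneg (x k) :
      0 ≤ ∑ k, x k ^ 2).eq_or_lt with h | h
    · have hx : ∀ i, x i = 0 := fun i => by
        simpa using (Finset.sum_eq_zero_iff_of_nonneg fun k _ => sq_nonneg (x k)).1 h.symm i
          (Finset.mem_univ i)
      simp [hx]
    · exact (lintegral_mul_exp_neg_Ioi (sq_nonneg _) h).symm
  · fun_prop

section GaussianProduct

variable {ι : Type*} [Fintype ι] [DecidableEq ι]

theorem integrable_mul_exp_neg_mul_sq_gaussianReal (v : NNReal) {t : ℝ} (ht : 0 ≤ t)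
    {f : ℝ → ℝ} (hf : Integrable f (gaussianReal 0 v)) :
    Integrable (fun x => f x * Real.exp (-t * x ^ 2)) (gaussianReal 0 v) := by
  refine hf.mul_bdd (c := 1) (by fun_prop) (Filter.Eventually.of_forall fun x => ?_)
  rw [Real.norm_eq_abs, Real.abs_exp, Real.exp_le_one_iff]
  nlinarith [mul_nonneg ht (sq_nonneg x)]

theorem integrable_sq_gaussianReal (v : NNReal) :
    Integrable (fun x : ℝ => x ^ 2) (gaussianReal 0 v) :=
  (memLp_id_gaussianReal 2).integrable_sq

theorem integrable_fun_id_gaussianReal (v : NNReal) :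
    Integrable (fun x : ℝ => x) (gaussianReal 0 v) :=
  memLp_one_iff_integrable.1 (memLp_id_gaussianReal 1)

theorem mul_mul_exp_neg_sum_sq_eq_prod (t : ℝ) (x : ι → ℝ) (i j : ι) :
    x i * x j * Real.exp (-t * ∑ k, x k ^ 2)
      = ∏ k, ((if k = i then x k else 1) * (if k = j then x k else 1))
          * Real.exp (-t * x k ^ 2) := by
  rw [Finset.prod_mul_distrib, Finset.prod_mul_distrib, Finset.prod_ite_eq' Finset.univ i x,
    Finset.prod_ite_eq' Finset.univ j x, Finset.mul_sum, Real.exp_sum]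
  simp

theorem integrable_mul_mul_exp_neg_pi_gaussianReal (w : ι → NNReal) {t : ℝ} (ht : 0 ≤ t)
    (i j : ι) :
    Integrable (fun x : ι → ℝ => x i * x j * Real.exp (-t * ∑ k, x k ^ 2))
      (Measure.pi fun k => gaussianReal 0 (w k)) := by
  simp only [mul_mul_exp_neg_sum_sq_eq_prod]
  refine Integrable.fintype_prod_dep (μ := fun k => gaussianReal 0 (w k))
    (f := fun k y => ((if k = i then y else 1) * (if k = j then y else 1))
          * Real.exp (-t * y ^ 2)) fun k => ?_
  refine integrable_mul_exp_neg_mul_sq_gaussianReal (w k) ht ?_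
  split_ifs <;> simp only [mul_one, one_mul, ← sq, integrable_sq_gaussianReal,
    integrable_fun_id_gaussianReal, integrable_const]

theorem integral_mul_mul_exp_neg_pi_gaussianReal (w : ι → NNReal) {t : ℝ} (ht : 0 ≤ t)
    (i j : ι) :
    ∫ x : ι → ℝ, x i * x j * Real.exp (-t * ∑ k, x k ^ 2)
        ∂(Measure.pi fun k => gaussianReal 0 (w k))
      = if i = j then w i * (1 + 2 * t * w i) ^ (-(3 / 2) : ℝ)
          * ∏ k ∈ Finset.univ.erase i, (1 + 2 * t * w k) ^ (-(1 / 2) : ℝ) else 0 := by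
  simp only [mul_mul_exp_neg_sum_sq_eq_prod]
  rw [integral_fintype_prod_eq_prod (fun k y => ((if k = i then y else 1) *
    (if k = j then y else 1)) * Real.exp (-t * y ^ 2))]
  split_ifs with h
  · subst h
    rw [← Finset.mul_prod_erase _ _ (Finset.mem_univ i)]
    congr 1
    · simpa [← sq] using integral_sq_mul_exp_neg_mul_sq_gaussianReal (w i) ht
    · refine Finset.prod_congr rfl fun k hk => ?_
      simpa [Finset.ne_of_mem_erase hk] using integral_exp_neg_mul_sq_gaussianReal (w k) ht
  · refine Finset.prod_eq_zero (Finset.mem_univ i) ?_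
    simpa [h] using integral_id_mul_exp_neg_mul_sq_gaussianReal (w i) ht

theorem lintegral_sq_sum_mul_exp_neg_pi_gaussianReal (w : ι → NNReal) (u : ι → ℝ) {t : ℝ}
    (ht : 0 ≤ t) :
    ∫⁻ x : ι → ℝ, ENNReal.ofReal ((∑ i, u i * x i) ^ 2 * Real.exp (-t * ∑ k, x k ^ 2))
        ∂(Measure.pi fun k => gaussianReal 0 (w k))
      = ENNReal.ofReal (∑ i, u i ^ 2 * (w i * (1 + 2 * t * w i) ^ (-(3 / 2) : ℝ)
          * ∏ k ∈ Finset.univ.erase i, (1 + 2 * t * w k) ^ (-(1 / 2) : ℝ))) := by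
  have e : ∀ x : ι → ℝ, (∑ i, u i * x i) ^ 2 * Real.exp (-t * ∑ k, x k ^ 2)
      = ∑ i, ∑ j, u i * u j * (x i * x j * Real.exp (-t * ∑ k, x k ^ 2)) := fun x => by
    rw [sq, Finset.sum_mul_sum, Finset.sum_mul]
    refine Finset.sum_congr rfl fun i _ => ?_
    rw [Finset.sum_mul]
    exact Finset.sum_congr rfl fun j _ => by ring
  have hint : ∀ i j, Integrable (fun x : ι → ℝ =>
      u i * u j * (x i * x j * Real.exp (-t * ∑ k, x k ^ 2)))
      (Measure.pi fun k => gaussianReal 0 (w k)) := fun i j =>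
    (integrable_mul_mul_exp_neg_pi_gaussianReal w ht i j).const_mul _
  have hint' : ∀ i, Integrable (fun x : ι → ℝ =>
      ∑ j, u i * u j * (x i * x j * Real.exp (-t * ∑ k, x k ^ 2)))
      (Measure.pi fun k => gaussianReal 0 (w k)) := fun i =>
    integrable_finsetSum _ fun j _ => hint i j
  rw [← ofReal_integral_eq_lintegral_ofReal]
  · congr 1
    simp only [e]
    rw [integral_finsetSum _ fun i _ => hint' i]
    refine Finset.sum_congr rfl fun i _ => ?_
    rw [integral_finsetSum _ fun j _ => hint i j]
    simp only [integral_const_mul, integral_mul_mul_exp_neg_pi_gaussianReal w ht, mul_ite,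
      mul_zero, Finset.sum_ite_eq, Finset.mem_univ, if_true]
    ring
  · simp only [e]
    exact integrable_finsetSum _ fun i _ => hint' i
  · exact Filter.Eventually.of_forall fun x => by positivity

/-- The integrand of `betaNM`, with `M` in place of `m` and `N` in place of `n * m`. -/
noncomputable def betaKernel (N M l t : ℝ) : ℝ :=
  (1 + 2 * t * M * (1 - l) / (N - 1)) ^ (-((N - 1) / 2)) * (1 + 2 * t * M * l) ^ (-(3 / 2 : ℝ))

theorem betaKernel_le (w : ι → NNReal) {M : ℝ} (hM : 0 < M) (hw : ∑ i, (w i : ℝ) = M)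
    (hN : 2 ≤ Fintype.card ι) {t : ℝ} (ht : 0 ≤ t) (i : ι) :
    betaKernel (Fintype.card ι) M (w i / M) t
      ≤ (1 + 2 * t * w i) ^ (-(3 / 2) : ℝ)
          * ∏ k ∈ Finset.univ.erase i, (1 + 2 * t * w k) ^ (-(1 / 2) : ℝ) := by
  have hcard : (Finset.univ.erase i).card = Fintype.card ι - 1 := by simp
  have hcardR : ((Finset.univ.erase i).card : ℝ) = (Fintype.card ι : ℝ) - 1 := by
    rw [hcard, Nat.cast_sub (by omega), Nat.cast_one]
  have hne : (Finset.univ.erase i).Nonempty := by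
    rw [← Finset.card_pos]
    omega
  have hsum : ∑ k ∈ Finset.univ.erase i, 2 * t * (w k : ℝ) = 2 * t * (M - w i) := by
    rw [← Finset.mul_sum, ← hw, ← Finset.add_sum_erase _ _ (Finset.mem_univ i)]
    ring
  have hamgm := prod_one_add_le_pow (Finset.univ.erase i) hne (fun k => 2 * t * (w k : ℝ))
    fun k _ => by positivity
  have hb : 0 < 1 + 2 * t * (M - w i) / ((Fintype.card ι : ℝ) - 1) := by
    rw [← hsum, ← hcardR]
    positivity
  rw [hsum, hcardR] at hamgm
  have hprod : 0 < ∏ k ∈ Finset.univ.erase i, (1 + 2 * t * (w k : ℝ)) :=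
    Finset.prod_pos fun k _ => by positivity
  rw [betaKernel, mul_comm, show 2 * t * M * (w i / M) = 2 * t * w i by field_simp,
    show 2 * t * M * (1 - w i / M) = 2 * t * (M - w i) by field_simp,
    Real.finsetProd_rpow _ _ fun k _ => by positivity]
  gcongr
  calc _ = ((1 + 2 * t * (M - w i) / ((Fintype.card ι : ℝ) - 1))
            ^ (Finset.univ.erase i).card) ^ (-(1 / 2) : ℝ) := by
        rw [← Real.rpow_natCast, ← Real.rpow_mul hb.le, hcardR]
        congr 1
        ring
    _ ≤ _ := Real.rpow_le_rpow_of_nonpos hprod hamgm (by norm_num)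

theorem ofReal_le_lintegral_sq_sum_div_pi_gaussianReal (w : ι → NNReal) (u : ι → ℝ) {M β : ℝ}
    (hM : 0 < M) (hw : ∑ i, (w i : ℝ) = M) (hN : 2 ≤ Fintype.card ι)
    (hβ : ∀ l ∈ Set.Icc (0 : ℝ) 1,
      β ≤ ∫ t in Set.Ioi (0 : ℝ), betaKernel (Fintype.card ι) M l t) :
    ENNReal.ofReal (β * ∑ i, u i ^ 2 * w i)
      ≤ ∫⁻ x : ι → ℝ, ENNReal.ofReal ((∑ i, u i * x i) ^ 2 / ∑ k, x k ^ 2)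
          ∂(Measure.pi fun k => gaussianReal 0 (w k)) := by
  have hl : ∀ i, (w i : ℝ) / M ∈ Set.Icc (0 : ℝ) 1 := fun i =>
    ⟨by positivity, (div_le_one hM).2 (hw ▸ Finset.single_le_sum (f := fun j => (w j : ℝ))
      (fun j _ => (w j).2) (Finset.mem_univ i))⟩
  rw [lintegral_sq_sum_div_eq]
  calc ENNReal.ofReal (β * ∑ i, u i ^ 2 * w i)
      ≤ ∑ i, ENNReal.ofReal (u i ^ 2 * w i) * ENNReal.ofReal β := by
        rw [← Finset.sum_mul, ← ENNReal.ofReal_sum_of_nonneg fun i _ => by positivity,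
          ← ENNReal.ofReal_mul (Finset.sum_nonneg fun i _ => by positivity), mul_comm]
    _ ≤ ∑ i, ENNReal.ofReal (u i ^ 2 * w i) * ∫⁻ t in Set.Ioi (0 : ℝ),
          ENNReal.ofReal (betaKernel (Fintype.card ι) M (w i / M) t) := by
        gcongr with i
        refine (ENNReal.ofReal_le_ofReal (hβ _ (hl i))).trans ?_
        exact ofReal_integral_le_lintegral_ofReal _ _
    _ = ∫⁻ t in Set.Ioi (0 : ℝ), ∑ i, ENNReal.ofReal (u i ^ 2 * w i) *
          ENNReal.ofReal (betaKernel (Fintype.card ι) M (w i / M) t) := by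
        have hmeas : ∀ i, Measurable fun t =>
            ENNReal.ofReal (betaKernel (Fintype.card ι) M (w i / M) t) := fun i => by
          unfold betaKernel
          fun_prop
        rw [lintegral_finsetSum _ fun i _ => (hmeas i).const_mul _]
        exact Finset.sum_congr rfl fun i _ => (lintegral_const_mul _ (hmeas i)).symm
    _ ≤ _ := by
        refine setLIntegral_mono' measurableSet_Ioi fun t ht => ?_
        rw [lintegral_sq_sum_mul_exp_neg_pi_gaussianReal w u (le_of_lt ht),
          ENNReal.ofReal_sum_of_nonneg fun i _ => by have : 0 < t := ht; positivity]
        gcongr with i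
        rw [← ENNReal.ofReal_mul (by positivity), mul_assoc (w i : ℝ),
          ← mul_assoc (u i ^ 2)]
        gcongr
        exact betaKernel_le w hM hw hN (le_of_lt ht) i

end GaussianProduct

theorem OrthonormalBasis.sum_dotProduct_mul_dotProduct {ι : Type*} [Fintype ι]
    (e : OrthonormalBasis ι ℝ (EuclideanSpace ℝ ι)) (x y : ι → ℝ) :
    ∑ i, (x ⬝ᵥ (e i).ofLp) * ((e i).ofLp ⬝ᵥ y) = x ⬝ᵥ y := by
  have h := e.sum_inner_mul_inner (WithLp.toLp 2 x) (WithLp.toLp 2 y)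
  simp only [EuclideanSpace.inner_eq_star_dotProduct, star_trivial] at h
  rw [dotProduct_comm x y, ← h]
  exact Finset.sum_congr rfl fun i _ => by rw [dotProduct_comm x, dotProduct_comm _ y]

theorem hasGaussianLaw_of_map_eq {Ω : Type*} [MeasurableSpace Ω] {μ : Measure Ω}
    {X : Ω → ℝ} {a : ℝ} {v : NNReal}
    (hX : Measure.map X μ = gaussianReal a v) : HasGaussianLaw X μ where
  isGaussian_map := hX ▸ inferInstance

section GaussianSeries

variable {ι κ Ω : Type*} [Fintype ι] [Fintype κ] [MeasurableSpace Ω] {μ : Measure Ω}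
  {z : κ → Ω → ℝ}

theorem covariance_linear_combination [IsProbabilityMeasure μ] (hindep : iIndepFun z μ)
    (hgauss : ∀ k, Measure.map (z k) μ = gaussianReal 0 1) (c d : κ → ℝ) :
    cov[fun ω => ∑ k, z k ω * c k, fun ω => ∑ k, z k ω * d k; μ] = ∑ k, c k * d k := by
  classical
  have hz : ∀ k, MemLp (z k) 2 μ := fun k => (hasGaussianLaw_of_map_eq (hgauss k)).memLp_two
  have hvar : ∀ k, cov[z k, z k; μ] = 1 := fun k => by
    rw [covariance_self (hz k).aestronglyMeasurable.aemeasurable,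
      ← variance_id_map (hz k).aestronglyMeasurable.aemeasurable, hgauss,
      variance_id_gaussianReal, NNReal.coe_one]
  have hcov : ∀ k l, cov[z k, z l; μ] = if k = l then 1 else 0 := fun k l => by
    split_ifs with h
    · rw [← h, hvar]
    · exact (hindep.indepFun h).covariance_eq_zero (hz k) (hz l)
  rw [covariance_fun_sum_fun_sum (fun k => (hz k).mul_const _) (fun k => (hz k).mul_const _)]
  simp only [covariance_mul_const_left, covariance_mul_const_right, hcov]
  simp [mul_comm]

theorem integral_linear_combination_eq_zero
    (hgauss : ∀ k, Measure.map (z k) μ = gaussianReal 0 1) (c : κ → ℝ) :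
    ∫ ω, ∑ k, z k ω * c k ∂μ = 0 := by
  have hz := fun k => hasGaussianLaw_of_map_eq (hgauss k)
  rw [integral_finsetSum _ fun k _ => (hz k).integrable.mul_const _]
  refine Finset.sum_eq_zero fun k _ => ?_
  have h : ∫ ω, z k ω ∂μ = 0 := by
    rw [← integral_id_gaussianReal (μ := 0) (v := 1), ← hgauss k,
      integral_map (hz k).aemeasurable (by fun_prop)]
  rw [integral_mul_const, h, zero_mul]

theorem hasGaussianLaw_linear_combinations (hindep : iIndepFun z μ)
    (hgauss : ∀ k, Measure.map (z k) μ = gaussianReal 0 1) (c : κ → ι → ℝ) :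
    HasGaussianLaw (fun ω i => ∑ k, z k ω * c k i) μ := by
  classical
  have h := (hindep.hasGaussianLaw fun k => hasGaussianLaw_of_map_eq (hgauss k)).map_fun
    (LinearMap.toContinuousLinearMap (Matrix.toLin' (Matrix.of c)ᵀ))
  convert! h using 3 with ω i
  simp [Matrix.toLin'_apply, Matrix.mulVec, dotProduct, mul_comm]

theorem hasGaussianLaw_linear_combination (hindep : iIndepFun z μ)
    (hgauss : ∀ k, Measure.map (z k) μ = gaussianReal 0 1) (c : κ → ℝ) :
    HasGaussianLaw (fun ω => ∑ k, z k ω * c k) μ :=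
  (hasGaussianLaw_linear_combinations hindep hgauss fun k (_ : Unit) => c k).map_fun
    (ContinuousLinearMap.proj ())

theorem map_linear_combination [IsProbabilityMeasure μ] (hindep : iIndepFun z μ)
    (hgauss : ∀ k, Measure.map (z k) μ = gaussianReal 0 1) (c : κ → ℝ) :
    Measure.map (fun ω => ∑ k, z k ω * c k) μ
      = gaussianReal 0 (∑ k, c k * c k).toNNReal := by
  have h := hasGaussianLaw_linear_combination hindep hgauss c
  rw [h.map_eq_gaussianReal, integral_linear_combination_eq_zero hgauss,
    ← covariance_self h.aemeasurable, covariance_linear_combination hindep hgauss]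

theorem map_linear_combinations_eq_pi [DecidableEq ι] [IsProbabilityMeasure μ]
    (hindep : iIndepFun z μ)
    (hgauss : ∀ k, Measure.map (z k) μ = gaussianReal 0 1) (c : κ → ι → ℝ) (w : ι → NNReal)
    (hc : ∀ i j, ∑ k, c k i * c k j = if i = j then (w i : ℝ) else 0) :
    Measure.map (fun ω i => ∑ k, z k ω * c k i) μ
      = Measure.pi fun i => gaussianReal 0 (w i) := by
  have h := hasGaussianLaw_linear_combinations hindep hgauss c
  have hi : iIndepFun (fun i ω => ∑ k, z k ω * c k i) μ :=
    h.iIndepFun_of_covariance_eq_zero fun i j hij => by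
      rw [covariance_linear_combination hindep hgauss, hc, if_neg hij]
  rw [(iIndepFun_iff_map_fun_eq_pi_map fun i => h.aemeasurable.eval i).1 hi]
  congr 1 with i : 1
  rw [map_linear_combination hindep hgauss, hc, if_pos rfl, Real.toNNReal_coe]

theorem ofReal_le_lintegral_sq_dotProduct_div [DecidableEq ι] [IsProbabilityMeasure μ]
    (hindep : iIndepFun z μ)
    (hgauss : ∀ k, Measure.map (z k) μ = gaussianReal 0 1) (b : κ → ι → ℝ)
    {W : Matrix ι ι ℝ} (hW : W = ∑ k, Matrix.vecMulVec (b k) (b k)) (v : ι → ℝ) {β : ℝ}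
    (htr : 0 < W.trace) (hN : 2 ≤ Fintype.card ι)
    (hβ : ∀ l ∈ Set.Icc (0 : ℝ) 1,
      β ≤ ∫ t in Set.Ioi (0 : ℝ), betaKernel (Fintype.card ι) W.trace l t) :
    ENNReal.ofReal (β * (v ⬝ᵥ W.mulVec v))
      ≤ ∫⁻ ω, ENNReal.ofReal ((∑ p, v p * ∑ k, z k ω * b k p) ^ 2
          / ∑ p, (∑ k, z k ω * b k p) ^ 2) ∂μ := by
  have hpsd : W.PosSemidef := by
    rw [hW]
    refine Matrix.posSemidef_sum _ fun k _ => ?_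
    simpa using Matrix.posSemidef_vecMulVec_self_star (b k)
  have hform : ∀ x y : ι → ℝ, x ⬝ᵥ W *ᵥ y = ∑ k, (x ⬝ᵥ b k) * (y ⬝ᵥ b k) := fun x y => by
    rw [hW, Matrix.sum_mulVec, dotProduct_sum]
    refine Finset.sum_congr rfl fun k _ => ?_
    rw [Matrix.vecMulVec_mulVec, dotProduct_comm (b k) y]
    simp [mul_comm]
  let e := hpsd.1.eigenvectorBasis
  let w : ι → NNReal := fun i => ⟨hpsd.1.eigenvalues i, hpsd.eigenvalues_nonneg i⟩
  have heig : ∀ j, W *ᵥ (e j).ofLp = (w j : ℝ) • (e j).ofLp := hpsd.1.mulVec_eigenvectorBasis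
  have horth : ∀ i j, (e i).ofLp ⬝ᵥ (e j).ofLp = if i = j then (1 : ℝ) else 0 := fun i j => by
    have h := orthonormal_iff_ite.1 e.orthonormal i j
    rwa [EuclideanSpace.inner_eq_star_dotProduct, star_trivial, dotProduct_comm] at h
  let c : κ → ι → ℝ := fun k i => (e i).ofLp ⬝ᵥ b k
  have hc : ∀ i j, ∑ k, c k i * c k j = if i = j then (w i : ℝ) else 0 := fun i j => by
    rw [← hform, heig, dotProduct_smul, horth]
    split_ifs with h <;> simp [h]
  have hlaw := map_linear_combinations_eq_pi hindep hgauss c w hc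
  have hh : ∀ ω i, ∑ k, z k ω * c k i = (e i).ofLp ⬝ᵥ fun p => ∑ k, z k ω * b k p := fun ω i => by
    simp only [c, dotProduct, Finset.mul_sum]
    rw [Finset.sum_comm]
    exact Finset.sum_congr rfl fun p _ => Finset.sum_congr rfl fun k _ => by ring
  have hsum : ∑ i, (w i : ℝ) = W.trace := by
    exact hpsd.1.trace_eq_sum_eigenvalues.symm
  have key := ofReal_le_lintegral_sq_sum_div_pi_gaussianReal w (fun i => v ⬝ᵥ (e i).ofLp)
    htr hsum hN hβ
  have hquad : v ⬝ᵥ W *ᵥ v = ∑ i, (v ⬝ᵥ (e i).ofLp) ^ 2 * w i := by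
    rw [← e.sum_dotProduct_mul_dotProduct v (W *ᵥ v)]
    refine Finset.sum_congr rfl fun i _ => ?_
    have hsymm : (e i).ofLp ⬝ᵥ W *ᵥ v = v ⬝ᵥ W *ᵥ (e i).ofLp := by
      rw [hform, hform]
      exact Finset.sum_congr rfl fun k _ => mul_comm _ _
    rw [hsymm, heig, dotProduct_smul, smul_eq_mul]
    ring
  rw [hquad]
  refine key.trans_eq ?_
  rw [← hlaw, lintegral_map' (by fun_prop)
    (hasGaussianLaw_linear_combinations hindep hgauss c).aemeasurable]
  refine lintegral_congr fun ω => ?_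
  simp only [hh]
  rw [e.sum_dotProduct_mul_dotProduct v]
  have hnorm := e.sum_dotProduct_mul_dotProduct (fun p => ∑ k, z k ω * b k p)
    (fun p => ∑ k, z k ω * b k p)
  simp only [dotProduct_comm (fun p => ∑ k, z k ω * b k p) (WithLp.ofLp _), ← sq] at hnorm
  rw [hnorm]
  simp only [dotProduct, ← sq]

end GaussianSeries

section SpectralNorm

variable {n m : ℕ}

theorem sigmaMax_nonneg (G : Matrix (Fin n) (Fin m) ℝ) : 0 ≤ sigmaMax G := norm_nonneg _

theorem sigmaMax_sq_le_sum_sq (G : Matrix (Fin n) (Fin m) ℝ) :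
    sigmaMax G ^ 2 ≤ ∑ p, vecM G p ^ 2 := by
  have hnn : 0 ≤ ∑ p, vecM G p ^ 2 := Finset.sum_nonneg fun p _ => sq_nonneg _
  refine (Real.le_sqrt (sigmaMax_nonneg G) hnn).1 ?_
  refine ContinuousLinearMap.opNorm_le_bound _ (Real.sqrt_nonneg _) fun x => ?_
  rw [EuclideanSpace.norm_eq, EuclideanSpace.norm_eq, ← Real.sqrt_mul hnn]
  refine Real.sqrt_le_sqrt ?_
  simp only [Real.norm_eq_abs, sq_abs]
  rw [Fintype.sum_prod_type_right, Finset.sum_mul]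
  refine Finset.sum_le_sum fun i _ => ?_
  exact Finset.sum_mul_sq_le_sq_mul_sq Finset.univ (fun j => G i j) (fun j => x j)

theorem abs_vecM_le_sigmaMax (G : Matrix (Fin n) (Fin m) ℝ) (p : Fin m × Fin n) :
    |vecM G p| ≤ sigmaMax G := by
  have h := (LinearMap.toContinuousLinearMap (Matrix.toEuclideanLin G)).le_opNorm
    (EuclideanSpace.single p.1 (1 : ℝ))
  rw [PiLp.norm_single, norm_one, mul_one] at h
  refine le_trans ?_ h
  have h' := PiLp.norm_apply_le ((LinearMap.toContinuousLinearMap (Matrix.toEuclideanLin G))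
    (EuclideanSpace.single p.1 (1 : ℝ))) p.2
  simpa [vecM, Matrix.toLpLin_apply] using h'

theorem continuous_sigmaMax : Continuous (sigmaMax : Matrix (Fin n) (Fin m) ℝ → ℝ) := by
  let L : Matrix (Fin n) (Fin m) ℝ →ₗ[ℝ] EuclideanSpace ℝ (Fin m) →L[ℝ] EuclideanSpace ℝ (Fin n) :=
    LinearMap.toContinuousLinearMap.toLinearMap ∘ₗ Matrix.toEuclideanLin.toLinearMap
  exact L.continuous_of_finiteDimensional.norm

theorem vecM_sum_smul {r : ℕ} (x : Fin r → ℝ) (B : Fin r → Matrix (Fin n) (Fin m) ℝ)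
    (p : Fin m × Fin n) : vecM (∑ k, x k • B k) p = ∑ k, x k * vecM (B k) p := by
  simp [vecM, Matrix.sum_apply]

theorem trace_sum_vecMulVec_vecM {r : ℕ} (B : Fin r → Matrix (Fin n) (Fin m) ℝ) :
    (∑ k, Matrix.vecMulVec (vecM (B k)) (vecM (B k))).trace = (∑ k, (B k)ᵀ * B k).trace := by
  simp only [Matrix.trace_sum]
  refine Finset.sum_congr rfl fun k _ => ?_
  simp [Matrix.trace, Matrix.vecMulVec_apply, Matrix.mul_apply, vecM, Fintype.sum_prod_type]

theorem betaNM_le_integral_betaKernel (hnm : 1 ≤ n * m) {l : ℝ} (hl : l ∈ Set.Icc (0 : ℝ) 1) :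
    betaNM n m ≤ ∫ t in Set.Ioi (0 : ℝ), betaKernel ((n : ℝ) * m) m l t := by
  refine ciInf_le (f := fun l : Set.Icc (0 : ℝ) 1 =>
    ∫ t in Set.Ioi (0 : ℝ), betaKernel ((n : ℝ) * m) m l t) ⟨0, ?_⟩ ⟨l, hl⟩
  rintro _ ⟨l, rfl⟩
  refine setIntegral_nonneg measurableSet_Ioi fun t ht => ?_
  have ht : 0 < t := ht
  have h0 := l.2.1
  have h1 : 0 ≤ 1 - (l : ℝ) := sub_nonneg.2 l.2.2
  have hN : (0 : ℝ) ≤ (n : ℝ) * m - 1 := sub_nonneg.2 (by exact_mod_cast hnm)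
  unfold betaKernel
  positivity

theorem integrable_sq_sum_div_sigmaMax_sq {Ω : Type*} [MeasurableSpace Ω] {μ : Measure Ω}
    [IsFiniteMeasure μ] {r : ℕ} {z : Fin r → Ω → ℝ} (hz : ∀ k, AEMeasurable (z k) μ)
    (B : Fin r → Matrix (Fin n) (Fin m) ℝ) (v : Fin m × Fin n → ℝ) :
    Integrable (fun ω => (∑ p, v p * vecM (∑ k, z k ω • B k) p) ^ 2
      / sigmaMax (∑ k, z k ω • B k) ^ 2) μ := by
  have hσ : Measurable fun x : Fin r → ℝ => sigmaMax (∑ k, x k • B k) :=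
    (continuous_sigmaMax.comp (by fun_prop)).measurable
  have hF : Measurable fun x : Fin r → ℝ => (∑ p, v p * vecM (∑ k, x k • B k) p) ^ 2
      / sigmaMax (∑ k, x k • B k) ^ 2 := by
    simp only [vecM_sum_smul]
    fun_prop
  refine Integrable.of_bound
    (hF.comp_aemeasurable (aemeasurable_pi_lambda (fun ω k => z k ω) hz)).aestronglyMeasurable
    ((∑ p, |v p|) ^ 2) (Filter.Eventually.of_forall fun ω => ?_)
  rw [Real.norm_eq_abs, abs_of_nonneg (by positivity)]
  refine div_le_of_le_mul₀ (sq_nonneg _) (sq_nonneg _) ?_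
  rw [← mul_pow, ← sq_abs]
  refine pow_le_pow_left₀ (abs_nonneg _) ?_ 2
  rw [Finset.sum_mul]
  refine (Finset.abs_sum_le_sum_abs _ _).trans (Finset.sum_le_sum fun p _ => ?_)
  rw [abs_mul]
  exact mul_le_mul_of_nonneg_left (abs_vecM_le_sigmaMax _ p) (abs_nonneg _)

theorem ae_sigmaMax_pos {Ω : Type*} [MeasurableSpace Ω] {μ : Measure Ω} [IsProbabilityMeasure μ]
    {r : ℕ} {z : Fin r → Ω → ℝ} (hindep : iIndepFun z μ)
    (hgauss : ∀ k, Measure.map (z k) μ = gaussianReal 0 1)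
    (B : Fin r → Matrix (Fin n) (Fin m) ℝ) {k : Fin r} (hk : B k ≠ 0) :
    ∀ᵐ ω ∂μ, 0 < sigmaMax (∑ k, z k ω • B k) := by
  obtain ⟨p, hp⟩ : ∃ p, vecM (B k) p ≠ 0 := by
    by_contra! h
    exact hk (Matrix.ext fun i j => h (j, i))
  have hpos : 0 < ∑ k, vecM (B k) p * vecM (B k) p :=
    Finset.sum_pos' (fun _ _ => mul_self_nonneg _) ⟨k, Finset.mem_univ k, mul_self_pos.2 hp⟩
  have hlaw := map_linear_combination hindep hgauss fun k => vecM (B k) p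
  have := nullSingletonClass_gaussianReal (μ := 0) (Real.toNNReal_pos.2 hpos).ne'
  have hae : ∀ᵐ x ∂(Measure.map (fun ω => ∑ k, z k ω * vecM (B k) p) μ), x ≠ 0 := by
    rw [hlaw]
    exact Measure.ae_ne _ _
  filter_upwards [ae_of_ae_map
    (hasGaussianLaw_linear_combination hindep hgauss fun k => vecM (B k) p).aemeasurable hae]
    with ω hω
  rw [← vecM_sum_smul] at hω
  exact (abs_pos.2 hω).trans_le (abs_vecM_le_sigmaMax _ p)

end SpectralNorm

/-- Theorem 2.2, main inequality.
For a Gaussian matrix series `G = ∑ₖ zₖ Bₖ` with `∑ₖ Bₖᵀ Bₖ = Iₘ`,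
`∑ₖ Bₖ Bₖᵀ ⪯ Iₙ` and covariance `W = ∑ₖ vec(Bₖ)vec(Bₖ)ᵀ`, we have
`σmax(G) > 0` a.s. and `E[vec(G)vec(G)ᵀ/σmax(G)²] ⪰ β_{n,m} W`. -/
theorem stmt4 {n m r : ℕ} (hm : 1 ≤ m) (hmn : m ≤ n) (hnm2 : 2 ≤ n * m)
    (B : Fin r → Matrix (Fin n) (Fin m) ℝ)
    (hBtB : ∑ k, (B k)ᵀ * B k = 1)
    (hBBt : ((1 : Matrix (Fin n) (Fin n) ℝ) - ∑ k, B k * (B k)ᵀ).PosSemidef)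
    {Ω : Type*} [MeasurableSpace Ω] (μ : Measure Ω) [IsProbabilityMeasure μ]
    (z : Fin r → Ω → ℝ)
    (hindep : iIndepFun z μ)
    (hgauss : ∀ k, Measure.map (z k) μ = gaussianReal 0 1)
    (W : Matrix (Fin m × Fin n) (Fin m × Fin n) ℝ)
    (hW : W = ∑ k, Matrix.vecMulVec (vecM (B k)) (vecM (B k))) :
    (∀ᵐ ω ∂μ, 0 < sigmaMax (∑ k, z k ω • B k)) ∧
    ∀ v : Fin m × Fin n → ℝ,
      betaNM n m * (v ⬝ᵥ W.mulVec v)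
        ≤ ∫ ω, (∑ p : Fin m × Fin n, v p * vecM (∑ k, z k ω • B k) p) ^ 2
              / (sigmaMax (∑ k, z k ω • B k)) ^ 2 ∂μ := by

  have hz : ∀ k, AEMeasurable (z k) μ := fun k =>
    (hasGaussianLaw_of_map_eq (hgauss k)).aemeasurable
  have hm0 : (0 : ℝ) < m := by exact_mod_cast hm
  have htr : W.trace = m := by
    rw [hW, trace_sum_vecMulVec_vecM, hBtB, Matrix.trace_one, Fintype.card_fin]
  have hcard : Fintype.card (Fin m × Fin n) = n * m := by simp [mul_comm]
  have hpos : ∀ᵐ ω ∂μ, 0 < sigmaMax (∑ k, z k ω • B k) := by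
    obtain ⟨k, hk⟩ : ∃ k, B k ≠ 0 := by
      by_contra! h
      have : W.trace = 0 := by rw [hW, trace_sum_vecMulVec_vecM]; simp [h]
      exact hm0.ne' (htr ▸ this)
    exact ae_sigmaMax_pos hindep hgauss B hk
  refine ⟨hpos, fun v => ?_⟩
  have key := ofReal_le_lintegral_sq_dotProduct_div hindep hgauss (fun k => vecM (B k)) hW v
    (β := betaNM n m) (htr ▸ hm0) (by rw [hcard]; exact hnm2) fun l hl => by
      rw [hcard, htr, Nat.cast_mul]
      exact betaNM_le_integral_betaKernel (by omega) hl
  refine (ENNReal.ofReal_le_ofReal_iff (integral_nonneg fun ω => by positivity)).1 ?_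
  rw [ofReal_integral_eq_lintegral_ofReal (integrable_sq_sum_div_sigmaMax_sq hz B v)
    (Filter.Eventually.of_forall fun ω => by positivity)]
  refine key.trans (lintegral_mono_ae ?_)
  filter_upwards [hpos] with ω hω
  refine ENNReal.ofReal_le_ofReal ?_
  simp only [← vecM_sum_smul]
  exact div_le_div_of_nonneg_left (sq_nonneg _) (pow_pos hω 2) (sigmaMax_sq_le_sum_sq _)
end
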